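/- Let s ≥ 2, b ≥ 2, ψ : [0,1]^{s-1} → [0,1] measurable, A = {z ∈ [0,1]^s : ψ(z_1,…,z_{s-1}) ≥ z_s}, and suppose ∂A admits an (s−1)-dimensional Minkowski content M_A ∈ (0,∞). Then there exists a constant c > 0, depending only on s, b and ψ, such that the covering number satisfies Γ_k(ψ) ≤ c · b^{(1−1/s)k} for all k ∈ ℕ, where Γ_k(ψ) is the supremum over t ∈ [0,1]^{s-1} of the minimal number of pairwise disjoint b-adic elementary intervals of order k needed to cover ∂J_t* \ ∂[0,1]^s, with J_t* = ([0,t) × [0,1]) ∩ A. -/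

import Mathlib

open MeasureTheory Set Filter

/-- The half-open anchored box `[0,t) = ∏_j [0, t_j)`. -/
def lowerBox {d : ℕ} (t : Fin d → ℝ) : Set (Fin d → ℝ) :=
  {y | ∀ i, 0 ≤ y i ∧ y i < t i}

/-- The region `A = {z ∈ [0,1]^s : ψ(z_1,…,z_{s-1}) ≥ z_s}` (with `s = d+1`). -/
def graphRegion₁ {d : ℕ} (ψ : (Fin d → ℝ) → ℝ) : Set ((Fin d → ℝ) × ℝ) :=
  {z | z.1 ∈ Icc (0 : Fin d → ℝ) 1 ∧ z.2 ∈ Icc (0 : ℝ) 1 ∧ z.2 ≤ ψ z.1}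

/-- The test set `J_t* = ([0,t) × [0,1]) ∩ A`. -/
def Jstar₁ {d : ℕ} (ψ : (Fin d → ℝ) → ℝ) (t : Fin d → ℝ) : Set ((Fin d → ℝ) × ℝ) :=
  (lowerBox t ×ˢ Icc (0 : ℝ) 1) ∩ graphRegion₁ ψ

/-- The closed unit cube `[0,1]^{d+1}`. -/
def unitCubeP (d : ℕ) : Set ((Fin d → ℝ) × ℝ) :=
  (Icc (0 : Fin d → ℝ) 1) ×ˢ (Icc (0 : ℝ) 1)

/-- A `(d+1)`-dimensional `b`-adic elementary interval of order `k`. -/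
def IsElemIntervalP {d : ℕ} (b k : ℕ) (E : Set ((Fin d → ℝ) × ℝ)) : Prop :=
  ∃ (ev : Fin d → ℕ) (el : ℕ) (a : Fin d → ℕ) (al : ℕ),
    (∀ i, a i < b ^ ev i) ∧ al < b ^ el ∧ (∑ i, ev i) + el = k ∧
    E = {z | (∀ i, (a i : ℝ) / b ^ ev i ≤ z.1 i ∧ z.1 i < ((a i : ℝ) + 1) / b ^ ev i) ∧
             ((al : ℝ) / b ^ el ≤ z.2 ∧ z.2 < ((al : ℝ) + 1) / b ^ el)}

/-- The closed Euclidean `ε`-neighborhood of a set `E ⊆ ℝ^{d} × ℝ = ℝ^{d+1}`. -/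
def euclNbhdP {d : ℕ} (E : Set ((Fin d → ℝ) × ℝ)) (ε : ℝ) : Set ((Fin d → ℝ) × ℝ) :=
  {x | ∃ y ∈ E, Real.sqrt ((∑ i, (x.1 i - y.1 i) ^ 2) + (x.2 - y.2) ^ 2) ≤ ε}

/-- `∂A` admits the `(s-1)`-dimensional Minkowski content `M` (with `s = d+1`). -/
def HasMinkowskiContentP {d : ℕ} (A : Set ((Fin d → ℝ) × ℝ)) (M : ℝ) : Prop :=
  Tendsto (fun ε : ℝ => (volume (euclNbhdP (frontier A) ε)).toReal / (2 * ε))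
    (nhdsWithin 0 (Set.Ioi 0)) (nhds M)

/-!
Cut the unit cube of `ℝ^s` into `b^k` congruent elementary intervals of order `k` that are as close
to cubes as possible: side `1 / n` in the first `s - 1` directions and `1 / m` in the last one,
where `n = b^⌊k/s⌋ ≤ m` and `n^(s-1) * m = b^k`. Inside the open cube, a boundary point of `J_u*`
lies either on `∂A` or on one of the `s - 1` hyperplanes `z_i = u_i`. The cells meeting `∂A` are
pairwise disjoint and lie in its `√s / n`-neighborhood, whose volume is `O(1 / n)`, and a hyperplane
meets at most one layer of cells; so each of these `s` sets meets only `O(b^k / n)` cells, and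
`b^k / n ≤ b * b^((1-1/s)k)`.
-/

open scoped NNReal Topology

section Topology

variable {X : Type*} [TopologicalSpace X] {s t : Set X}

lemma frontier_diff_frontier_subset_interior (h : s ⊆ t) :
    frontier s \ frontier t ⊆ interior t := fun _ hx =>
  by_contra fun hx' => hx.2 ⟨closure_mono h (frontier_subset_closure hx.1), hx'⟩

end Topology

section Grid

/-- The `a`-th of the consecutive half-open intervals of length `1 / n` starting at `0`; those with
`a < n` partition `[0, 1)`. -/
def gridInterval (n a : ℕ) : Set ℝ := Ico ((a : ℝ) / n) ((a + 1 : ℝ) / n)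

lemma mem_gridInterval_iff {n a : ℕ} (hn : 0 < n) {x : ℝ} (hx : 0 ≤ x) :
    x ∈ gridInterval n a ↔ ⌊x * n⌋₊ = a := by
  have hn' : (0 : ℝ) < n := Nat.cast_pos.2 hn
  rw [gridInterval, mem_Ico, div_le_iff₀ hn', lt_div_iff₀ hn', Nat.floor_eq_iff (by positivity)]

lemma floor_eq_of_mem_gridInterval {n a : ℕ} (hn : 0 < n) {x : ℝ} (hx : x ∈ gridInterval n a) :
    ⌊x * n⌋₊ = a :=
  (mem_gridInterval_iff hn (le_trans (by positivity) hx.1)).1 hx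

lemma exists_mem_gridInterval {n : ℕ} (hn : 0 < n) {x : ℝ} (hx : x ∈ Ico (0 : ℝ) 1) :
    ∃ a : Fin n, x ∈ gridInterval n a := by
  have hlt : ⌊x * n⌋₊ < n := by
    rw [Nat.floor_lt (mul_nonneg hx.1 n.cast_nonneg)]
    exact mul_lt_of_lt_one_left (Nat.cast_pos.2 hn) hx.2
  exact ⟨⟨_, hlt⟩, (mem_gridInterval_iff hn hx.1).2 rfl⟩

lemma abs_sub_le_of_mem_gridInterval {n a : ℕ} {x y : ℝ} (hx : x ∈ gridInterval n a)
    (hy : y ∈ gridInterval n a) : |x - y| ≤ 1 / n := by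
  simp only [gridInterval, add_div, mem_Ico] at hx hy
  exact abs_le.2 ⟨by linarith, by linarith⟩

lemma volume_gridInterval (n a : ℕ) : volume (gridInterval n a) = ENNReal.ofReal (1 / n) := by
  rw [gridInterval, Real.volume_Ico, add_div, add_sub_cancel_left]

variable {ι : Type*} {n m : ℕ}

/-- The cells `∏ i, [p_i / n, (p_i + 1) / n) × [l / m, (l + 1) / m)` of the grid that cuts the unit
cube into `n` layers along each of the first directions and into `m` layers along the last one. -/
def gridCell (p : (ι → Fin n) × Fin m) : Set ((ι → ℝ) × ℝ) :=
  (Set.pi univ fun i => gridInterval n (p.1 i)) ×ˢ gridInterval m p.2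

lemma pairwise_disjoint_gridCell (hn : 0 < n) (hm : 0 < m) :
    Pairwise fun p p' : (ι → Fin n) × Fin m => Disjoint (gridCell p) (gridCell p') := by
  refine fun p p' hne => Set.disjoint_left.2 fun z hz hz' => hne ?_
  refine Prod.ext (funext fun i => Fin.ext ?_) (Fin.ext ?_)
  · rw [← floor_eq_of_mem_gridInterval hn (hz.1 i trivial),
      ← floor_eq_of_mem_gridInterval hn (hz'.1 i trivial)]
  · rw [← floor_eq_of_mem_gridInterval hm hz.2, ← floor_eq_of_mem_gridInterval hm hz'.2]

lemma exists_mem_gridCell (hn : 0 < n) (hm : 0 < m) {z : (ι → ℝ) × ℝ}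
    (hz : z ∈ (Set.pi univ fun _ => Ico (0 : ℝ) 1) ×ˢ Ico (0 : ℝ) 1) :
    ∃ p : (ι → Fin n) × Fin m, z ∈ gridCell p := by
  choose a ha using fun i => exists_mem_gridInterval hn (hz.1 i trivial)
  obtain ⟨l, hl⟩ := exists_mem_gridInterval hm hz.2
  exact ⟨(a, l), fun i _ => ha i, hl⟩

lemma measurableSet_gridCell [Countable ι] (p : (ι → Fin n) × Fin m) : MeasurableSet (gridCell p) :=
  (MeasurableSet.univ_pi fun _ => measurableSet_Ico).prod measurableSet_Ico

variable [Fintype ι]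

lemma volume_gridCell (p : (ι → Fin n) × Fin m) :
    volume (gridCell p) = ENNReal.ofReal ((n ^ Fintype.card ι * m : ℝ)⁻¹) := by
  rw [gridCell, Measure.volume_eq_prod, Measure.prod_prod, volume_pi_pi]
  simp only [volume_gridInterval, Finset.prod_const, Finset.card_univ]
  rw [← ENNReal.ofReal_pow (by positivity), ← ENNReal.ofReal_mul (by positivity)]
  simp only [one_div, inv_pow, mul_inv]

lemma sqrt_sum_sq_sub_le_of_mem_gridCell (hn : 0 < n) (hnm : n ≤ m) {p : (ι → Fin n) × Fin m}
    {x y : (ι → ℝ) × ℝ} (hx : x ∈ gridCell p) (hy : y ∈ gridCell p) :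
    √((∑ i, (x.1 i - y.1 i) ^ 2) + (x.2 - y.2) ^ 2) ≤ √(Fintype.card ι + 1) / n := by
  have hfst : ∀ i, (x.1 i - y.1 i) ^ 2 ≤ (1 / n : ℝ) ^ 2 := fun i =>
    sq_le_sq.2 <| (abs_sub_le_of_mem_gridInterval (hx.1 i trivial) (hy.1 i trivial)).trans
      (le_abs_self _)
  have hsnd : (x.2 - y.2) ^ 2 ≤ (1 / n : ℝ) ^ 2 := by
    refine sq_le_sq.2 (((abs_sub_le_of_mem_gridInterval hx.2 hy.2).trans ?_).trans (le_abs_self _))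
    exact one_div_le_one_div_of_le (Nat.cast_pos.2 hn) (Nat.cast_le.2 hnm)
  calc √((∑ i, (x.1 i - y.1 i) ^ 2) + (x.2 - y.2) ^ 2)
      ≤ √((∑ _i : ι, (1 / n : ℝ) ^ 2) + (1 / n : ℝ) ^ 2) :=
        Real.sqrt_le_sqrt (add_le_add (Finset.sum_le_sum fun i _ => hfst i) hsnd)
    _ = √((Fintype.card ι + 1) * (1 / n : ℝ) ^ 2) := by
      rw [Finset.sum_const, Finset.card_univ, nsmul_eq_mul, add_one_mul]
    _ = √(Fintype.card ι + 1) / n := by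
      rw [Real.sqrt_mul (by positivity), Real.sqrt_sq (by positivity), mul_one_div]

variable [DecidableEq ι]

open scoped Classical in
/-- The grid cells, given by their indices, that meet the set `F`. -/
noncomputable def meetingCells (n m : ℕ) (F : Set ((ι → ℝ) × ℝ)) :
    Finset ((ι → Fin n) × Fin m) :=
  {p | (gridCell p ∩ F).Nonempty}

variable {F : Set ((ι → ℝ) × ℝ)}

lemma mem_meetingCells {p : (ι → Fin n) × Fin m} :
    p ∈ meetingCells n m F ↔ (gridCell p ∩ F).Nonempty := by
  simp only [meetingCells, Finset.mem_filter_univ]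

lemma inter_subset_biUnion_meetingCells (hn : 0 < n) (hm : 0 < m) :
    F ∩ (Set.pi univ fun _ => Ico (0 : ℝ) 1) ×ˢ Ico (0 : ℝ) 1 ⊆
      ⋃ p ∈ meetingCells n m F, gridCell p := by
  rintro z ⟨hzF, hz⟩
  obtain ⟨p, hp⟩ := exists_mem_gridCell hn hm hz
  exact mem_iUnion₂.2 ⟨p, mem_meetingCells.2 ⟨z, hp, hzF⟩, hp⟩

lemma card_meetingCells_le (n m : ℕ) (F : Set ((ι → ℝ) × ℝ)) :
    (meetingCells n m F).card ≤ n ^ Fintype.card ι * m := by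
  simpa using (meetingCells n m F).card_le_univ

lemma card_meetingCells_union_le (n m : ℕ) (F G : Set ((ι → ℝ) × ℝ)) :
    (meetingCells n m (F ∪ G)).card ≤ (meetingCells n m F).card + (meetingCells n m G).card := by
  refine le_trans (Finset.card_le_card fun p hp => ?_) (Finset.card_union_le _ _)
  simpa only [Finset.mem_union, mem_meetingCells, inter_union_distrib_left, union_nonempty] using hp

lemma card_meetingCells_iUnion_le {κ : Type*} [Fintype κ] (n m : ℕ)
    (F : κ → Set ((ι → ℝ) × ℝ)) :
    (meetingCells n m (⋃ j, F j)).card ≤ ∑ j, (meetingCells n m (F j)).card := by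
  refine le_trans (Finset.card_le_card fun p hp => ?_) Finset.card_biUnion_le
  simpa only [Finset.mem_biUnion, Finset.mem_univ, true_and, mem_meetingCells, inter_iUnion,
    nonempty_iUnion] using hp

lemma card_meetingCells_hyperplane_mul_le (hn : 0 < n) (m : ℕ) (i : ι) (x : ℝ) :
    (meetingCells n m {z : (ι → ℝ) × ℝ | z.1 i = x}).card * n ≤ n ^ Fintype.card ι * m := by
  have : Nonempty ι := ⟨i⟩
  rcases (meetingCells n m {z : (ι → ℝ) × ℝ | z.1 i = x}).eq_empty_or_nonempty with h | ⟨p₀, hp₀⟩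
  · simp only [h, Finset.card_empty, zero_mul, zero_le]
  have hlayer : ∀ p ∈ meetingCells n m {z : (ι → ℝ) × ℝ | z.1 i = x}, ⌊x * n⌋₊ = p.1 i := by
    intro p hp
    obtain ⟨z, hz, rfl⟩ := mem_meetingCells.1 hp
    exact floor_eq_of_mem_gridInterval hn (hz.1 i trivial)
  have hsub : meetingCells n m {z : (ι → ℝ) × ℝ | z.1 i = x} ⊆
      ({f ∈ Fintype.piFinset fun _ : ι => (Finset.univ : Finset (Fin n)) | f i = p₀.1 i} :
        Finset (ι → Fin n)) ×ˢ (Finset.univ : Finset (Fin m)) := by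
    intro p hp
    simpa using Fin.ext ((hlayer p hp).symm.trans (hlayer p₀ hp₀))
  have hcard := Finset.card_le_card hsub
  rw [Finset.card_product, Fintype.card_filter_piFinset_const_eq_of_mem _ _ (Finset.mem_univ _),
    Finset.card_fin, Finset.card_fin] at hcard
  calc _ ≤ n ^ (Fintype.card ι - 1) * m * n := Nat.mul_le_mul_right n hcard
    _ = n ^ Fintype.card ι * m := by rw [mul_right_comm, pow_sub_one_mul Fintype.card_ne_zero]

end Grid

section MinkowskiContent

variable {d : ℕ}

/-- The `d`-dimensional upper Minkowski content of `F ⊆ ℝ^{d+1}` is finite. In contrast with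
`HasMinkowskiContentP`, the volume is not passed through `ENNReal.toReal`, so that neighborhoods of
infinite volume are excluded. -/
def HasFiniteUpperMinkowskiContent (F : Set ((Fin d → ℝ) × ℝ)) : Prop :=
  ∃ C : ℝ≥0, ∀ᶠ ε in 𝓝[>] (0 : ℝ), volume (euclNbhdP F ε) ≤ C * ENNReal.ofReal ε

lemma HasMinkowskiContentP.hasFiniteUpperMinkowskiContent {A : Set ((Fin d → ℝ) × ℝ)} {M : ℝ}
    (h : HasMinkowskiContentP A M) (hM : 0 < M) :
    HasFiniteUpperMinkowskiContent (frontier A) := by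
  refine ⟨(2 * (M + 1)).toNNReal, ?_⟩
  filter_upwards [h.eventually (Ioo_mem_nhds hM (lt_add_one M)), self_mem_nhdsWithin]
    with ε hε (hεpos : 0 < ε)
  -- The positive limit excludes the junk value `ENNReal.toReal ⊤ = 0`.
  have hfin : volume (euclNbhdP (frontier A) ε) ≠ ⊤ := by
    intro htop
    simp [htop] at hε
  have hle := (div_lt_iff₀ (by positivity)).1 hε.2 |>.le
  rw [← ENNReal.ofReal, ← ENNReal.ofReal_mul (by positivity),
    ENNReal.le_ofReal_iff_toReal_le hfin (by positivity)]
  linarith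

lemma gridCell_subset_euclNbhdP {n m : ℕ} (hn : 0 < n) (hnm : n ≤ m)
    {p : (Fin d → Fin n) × Fin m} {F : Set ((Fin d → ℝ) × ℝ)} (h : (gridCell p ∩ F).Nonempty) :
    gridCell p ⊆ euclNbhdP F (√(d + 1) / n) := by
  obtain ⟨y, hy, hyF⟩ := h
  exact fun x hx => ⟨y, hyF, by simpa using sqrt_sum_sq_sub_le_of_mem_gridCell hn hnm hx hy⟩

lemma card_meetingCells_mul_volume_le {n m : ℕ} (hn : 0 < n) (hnm : n ≤ m)
    (F : Set ((Fin d → ℝ) × ℝ)) :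
    (meetingCells n m F).card * ENNReal.ofReal ((n ^ d * m : ℝ)⁻¹) ≤
      volume (euclNbhdP F (√(d + 1) / n)) := by
  calc (meetingCells n m F).card * ENNReal.ofReal ((n ^ d * m : ℝ)⁻¹)
      = ∑ p ∈ meetingCells n m F, volume (gridCell p) := by
        simp only [volume_gridCell, Fintype.card_fin, Finset.sum_const, nsmul_eq_mul]
    _ = volume (⋃ p ∈ meetingCells n m F, gridCell p) :=
        (measure_biUnion_finset
          (fun _ _ _ _ hne => pairwise_disjoint_gridCell hn (hn.trans_le hnm) hne)
          fun p _ => measurableSet_gridCell p).symm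
    _ ≤ volume (euclNbhdP F (√(d + 1) / n)) := measure_mono <| iUnion₂_subset fun _ hp =>
        gridCell_subset_euclNbhdP hn hnm (mem_meetingCells.1 hp)

lemma card_meetingCells_mul_le_of_volume_le {n m : ℕ} (hn : 0 < n) (hnm : n ≤ m)
    {F : Set ((Fin d → ℝ) × ℝ)} {C : ℝ≥0}
    (h : volume (euclNbhdP F (√(d + 1) / n)) ≤ C * ENNReal.ofReal (√(d + 1) / n)) :
    ((meetingCells n m F).card : ℝ) * n ≤ C * √(d + 1) * (n ^ d * m) := by
  have hn' : (0 : ℝ) < n := Nat.cast_pos.2 hn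
  have hm' : (0 : ℝ) < m := Nat.cast_pos.2 (hn.trans_le hnm)
  have hle := ENNReal.toReal_mono (by finiteness)
    ((card_meetingCells_mul_volume_le hn hnm F).trans h)
  rw [ENNReal.toReal_mul, ENNReal.toReal_mul, ENNReal.toReal_ofReal (by positivity),
    ENNReal.toReal_ofReal (by positivity), ENNReal.toReal_natCast, ENNReal.coe_toReal,
    ← div_eq_mul_inv, ← mul_div_assoc, div_le_div_iff₀ (by positivity) hn'] at hle
  exact hle

lemma HasFiniteUpperMinkowskiContent.exists_card_meetingCells_mul_le {F : Set ((Fin d → ℝ) × ℝ)}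
    (hF : HasFiniteUpperMinkowskiContent F) :
    ∃ C : ℝ, 0 < C ∧ ∀ n m : ℕ, 0 < n → n ≤ m →
      ((meetingCells n m F).card : ℝ) * n ≤ C * (n ^ d * m) := by
  obtain ⟨C, hC⟩ := hF
  obtain ⟨ε₀, hε₀ : 0 < ε₀, hC⟩ := mem_nhdsGT_iff_exists_Ioo_subset.1 hC
  refine ⟨C * √(d + 1) + √(d + 1) / ε₀, by positivity, fun n m hn hnm => ?_⟩
  have hn' : (0 : ℝ) < n := Nat.cast_pos.2 hn
  have hfine : 0 ≤ C * √(d + 1) := by positivity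
  have hcoarse : 0 ≤ √(d + 1) / ε₀ := by positivity
  rcases lt_or_ge (√(d + 1) / n) ε₀ with hlt | hge
  · refine (card_meetingCells_mul_le_of_volume_le hn hnm (hC ⟨by positivity, hlt⟩)).trans ?_
    gcongr
    exact le_add_of_nonneg_right hcoarse
  · have hn_le : (n : ℝ) ≤ √(d + 1) / ε₀ := (le_div_comm₀ hε₀ hn').1 hge
    have hcard : ((meetingCells n m F).card : ℝ) ≤ n ^ d * m := by
      exact_mod_cast (card_meetingCells_le n m F).trans_eq (by rw [Fintype.card_fin])
    rw [mul_comm]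
    gcongr
    exact hn_le.trans (le_add_of_nonneg_left hfine)

end MinkowskiContent

section ElementaryIntervals

variable {d : ℕ}

lemma isElemIntervalP_gridCell {b q l : ℕ} (p : (Fin d → Fin (b ^ q)) × Fin (b ^ l)) :
    IsElemIntervalP b (d * q + l) (gridCell p) :=
  ⟨fun _ => q, l, fun i => p.1 i, p.2, fun i => (p.1 i).2, p.2.2, by simp, by
    ext z; simp [gridCell, gridInterval]⟩

lemma exists_disjoint_elemIntervals_iUnion_eq {b : ℕ} (hb : 0 < b) {q l : ℕ}
    (S : Finset ((Fin d → Fin (b ^ q)) × Fin (b ^ l))) :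
    ∃ U : Fin S.card → Set ((Fin d → ℝ) × ℝ),
      (∀ i, IsElemIntervalP b (d * q + l) (U i)) ∧ (∀ i j, i ≠ j → Disjoint (U i) (U j)) ∧
      ⋃ i, U i = ⋃ p ∈ S, gridCell p := by
  refine ⟨fun i => gridCell (S.equivFin.symm i).1, fun i => isElemIntervalP_gridCell _,
    fun i j hij => pairwise_disjoint_gridCell (by positivity) (by positivity) fun h =>
      hij (S.equivFin.symm.injective (Subtype.ext h)), ?_⟩
  rw [S.equivFin.symm.surjective.iUnion_comp fun p : S => gridCell p.1, iUnion_subtype]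

end ElementaryIntervals

section BoundaryOfTestSet

variable {d : ℕ}

lemma interior_unitCubeP :
    interior (unitCubeP d) = (Set.pi univ fun _ => Ioo (0 : ℝ) 1) ×ˢ Ioo (0 : ℝ) 1 := by
  rw [unitCubeP, interior_prod_eq, ← Set.pi_univ_Icc, interior_pi_set finite_univ]
  simp only [interior_Icc, Pi.zero_apply, Pi.one_apply]

lemma lowerBox_eq_pi (u : Fin d → ℝ) : lowerBox u = Set.pi univ fun i => Ico 0 (u i) := by
  ext z; simp [lowerBox]

lemma exists_eq_of_mem_frontier_lowerBox {u y : Fin d → ℝ} (hy : y ∈ frontier (lowerBox u))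
    (hpos : ∀ i, 0 < y i) : ∃ i, y i = u i := by
  rw [lowerBox_eq_pi, frontier, closure_pi_set, interior_pi_set finite_univ] at hy
  by_contra! hne
  refine hy.2 fun i _ => ?_
  have hle : y i ≤ u i :=
    (closure_minimal Ico_subset_Icc_self isClosed_Icc (hy.1 i trivial)).2
  exact interior_Ico.ge ⟨hpos i, hle.lt_of_ne (hne i)⟩

lemma frontier_lowerBox_prod_inter_subset (u : Fin d → ℝ) :
    frontier (lowerBox u ×ˢ Icc (0 : ℝ) 1) ∩ interior (unitCubeP d) ⊆
      ⋃ i, {z | z.1 i = u i} := by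
  rintro z ⟨hz, hzint⟩
  rw [interior_unitCubeP] at hzint
  rw [frontier_prod_eq, frontier_Icc zero_le_one] at hz
  rcases hz with ⟨-, h0 | h1⟩ | ⟨hz, -⟩
  · exact absurd h0 hzint.2.1.ne'
  · exact absurd h1 hzint.2.2.ne
  · exact mem_iUnion.2 (exists_eq_of_mem_frontier_lowerBox hz fun i => (hzint.1 i trivial).1)

lemma frontier_lowerBox_prod_inter_diff_subset {u : Fin d → ℝ} (hu : u ≤ 1)
    (A : Set ((Fin d → ℝ) × ℝ)) :
    frontier (lowerBox u ×ˢ Icc (0 : ℝ) 1 ∩ A) \ frontier (unitCubeP d) ⊆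
      (frontier A ∪ ⋃ i, {z | z.1 i = u i}) ∩ interior (unitCubeP d) := by
  have hsub : lowerBox u ×ˢ Icc (0 : ℝ) 1 ∩ A ⊆ unitCubeP d := fun z hz =>
    ⟨⟨fun i => (hz.1.1 i).1, fun i => (hz.1.1 i).2.le.trans (hu i)⟩, hz.1.2⟩
  intro z hz
  have hzint := frontier_diff_frontier_subset_interior hsub hz
  refine ⟨?_, hzint⟩
  rcases frontier_inter_subset _ _ hz.1 with ⟨hbox, -⟩ | ⟨-, hA⟩
  · exact Or.inr (frontier_lowerBox_prod_inter_subset u ⟨hbox, hzint⟩)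
  · exact Or.inl hA

end BoundaryOfTestSet

section Covering

variable {d : ℕ}

lemma pow_le_mul_rpow_mul_pow_div {b : ℝ} (hb : 1 ≤ b) (k s : ℕ) :
    b ^ k ≤ b * b ^ ((1 - 1 / s : ℝ) * k) * b ^ (k / s) := by
  have hbpos : 0 < b := zero_lt_one.trans_le hb
  have hfloor : (k : ℝ) / s < (k / s : ℕ) + 1 := by
    simpa only [Nat.floor_div_eq_div] using Nat.lt_floor_add_one ((k : ℝ) / s)
  calc b ^ k = b ^ (k : ℝ) := (Real.rpow_natCast b k).symm
    _ ≤ b ^ (1 + (1 - 1 / s : ℝ) * k + (k / s : ℕ)) := by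
      refine Real.rpow_le_rpow_of_exponent_le hb ?_
      have hexp : (1 - 1 / s : ℝ) * k = k - k / s := by ring
      linarith
    _ = b * b ^ ((1 - 1 / s : ℝ) * k) * b ^ (k / s) := by
      rw [Real.rpow_add hbpos, Real.rpow_add hbpos, Real.rpow_one, Real.rpow_natCast]

lemma exists_eq_div_succ_le_and_mul_add_eq (d k : ℕ) :
    ∃ q l : ℕ, q = k / (d + 1) ∧ q ≤ l ∧ d * q + l = k := by
  have hle : d * (k / (d + 1)) + k / (d + 1) ≤ k := by
    simpa only [add_one_mul] using Nat.mul_div_le k (d + 1)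
  exact ⟨k / (d + 1), k - d * (k / (d + 1)), rfl, Nat.le_sub_of_add_le' hle,
    Nat.add_sub_of_le (le_of_add_le_left hle)⟩

lemma HasFiniteUpperMinkowskiContent.exists_card_meetingCells_union_hyperplanes_mul_le
    {F : Set ((Fin d → ℝ) × ℝ)} (hF : HasFiniteUpperMinkowskiContent F) :
    ∃ C : ℝ, 0 < C ∧ ∀ n m : ℕ, 0 < n → n ≤ m → ∀ u : Fin d → ℝ,
      ((meetingCells n m (F ∪ ⋃ i, {z | z.1 i = u i})).card : ℝ) * n ≤ C * (n ^ d * m) := by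
  obtain ⟨C, hC, hcard⟩ := hF.exists_card_meetingCells_mul_le
  refine ⟨C + d, by positivity, fun n m hn hnm u => ?_⟩
  have hunion : ((meetingCells n m (F ∪ ⋃ i, {z | z.1 i = u i})).card : ℝ) ≤
      (meetingCells n m F).card +
        ∑ i, ((meetingCells n m {z : (Fin d → ℝ) × ℝ | z.1 i = u i}).card : ℝ) := by
    exact_mod_cast (card_meetingCells_union_le n m _ _).trans
      (Nat.add_le_add_left (card_meetingCells_iUnion_le n m _) _)
  have hplane : ∀ i,
      ((meetingCells n m {z : (Fin d → ℝ) × ℝ | z.1 i = u i}).card : ℝ) * n ≤ n ^ d * m :=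
    fun i => by
      exact_mod_cast (card_meetingCells_hyperplane_mul_le hn m i (u i)).trans_eq
        (by rw [Fintype.card_fin])
  calc _ ≤ ((meetingCells n m F).card +
          ∑ i, ((meetingCells n m {z : (Fin d → ℝ) × ℝ | z.1 i = u i}).card : ℝ)) * n := by gcongr
    _ = (meetingCells n m F).card * n +
          ∑ i, ((meetingCells n m {z : (Fin d → ℝ) × ℝ | z.1 i = u i}).card : ℝ) * n := by
      rw [add_mul, Finset.sum_mul]
    _ ≤ C * (n ^ d * m) + ∑ _i : Fin d, (n ^ d * m : ℝ) :=
      add_le_add (hcard n m hn hnm) (Finset.sum_le_sum fun i _ => hplane i)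
    _ = (C + d) * (n ^ d * m) := by
      rw [Finset.sum_const, Finset.card_fin, nsmul_eq_mul, add_mul]

lemma frontier_diff_subset_biUnion_meetingCells {n m : ℕ} (hn : 0 < n) (hm : 0 < m)
    {u : Fin d → ℝ} (hu : u ≤ 1) (A : Set ((Fin d → ℝ) × ℝ)) :
    frontier (lowerBox u ×ˢ Icc (0 : ℝ) 1 ∩ A) \ frontier (unitCubeP d) ⊆
      ⋃ p ∈ meetingCells n m (frontier A ∪ ⋃ i, {z | z.1 i = u i}), gridCell p := by
  refine (frontier_lowerBox_prod_inter_diff_subset hu A).trans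
    (Subset.trans (inter_subset_inter_right _ ?_) (inter_subset_biUnion_meetingCells hn hm))
  rw [interior_unitCubeP]
  exact prod_mono (Set.pi_mono fun _ _ => Ioo_subset_Ico_self) Ioo_subset_Ico_self

end Covering

theorem covering_number_of_minkowski_general {d b : ℕ} (hb : 0 < b) {A : Set ((Fin d → ℝ) × ℝ)}
    (hA : HasFiniteUpperMinkowskiContent (frontier A)) :
    ∃ c : ℝ, 0 < c ∧
      ∀ k : ℕ, ∀ u ≤ (1 : Fin d → ℝ), ∃ v : ℕ,
        (v : ℝ) ≤ c * (b : ℝ) ^ ((1 - 1 / (d + 1 : ℝ)) * k) ∧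
        ∃ U : Fin v → Set ((Fin d → ℝ) × ℝ),
          (∀ i, IsElemIntervalP b k (U i)) ∧
          (∀ i j, i ≠ j → Disjoint (U i) (U j)) ∧
          frontier (lowerBox u ×ˢ Icc (0 : ℝ) 1 ∩ A) \ frontier (unitCubeP d) ⊆ ⋃ i, U i := by
  obtain ⟨C, hC, hcard⟩ := hA.exists_card_meetingCells_union_hyperplanes_mul_le
  refine ⟨C * b, by positivity, fun k u hu => ?_⟩
  obtain ⟨q, l, hq, hql, rfl⟩ := exists_eq_div_succ_le_and_mul_add_eq d k
  set S := meetingCells (b ^ q) (b ^ l) (frontier A ∪ ⋃ i, {z | z.1 i = u i})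
  obtain ⟨U, hU, hdisj, hUS⟩ := exists_disjoint_elemIntervals_iUnion_eq hb S
  refine ⟨S.card, ?_, U, hU, hdisj,
    hUS ▸ frontier_diff_subset_biUnion_meetingCells (by positivity) (by positivity) hu A⟩
  refine le_of_mul_le_mul_right ?_ (show (0 : ℝ) < b ^ q by positivity)
  calc (S.card : ℝ) * b ^ q ≤ C * b ^ (d * q + l) := by
        simpa [pow_add, pow_mul'] using
          hcard (b ^ q) (b ^ l) (by positivity) (Nat.pow_le_pow_right hb hql) u
    _ ≤ C * (b * b ^ ((1 - 1 / (d + 1 : ℝ)) * (d * q + l : ℕ)) * b ^ q) := by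
        gcongr
        simpa [← hq] using pow_le_mul_rpow_mul_pow_div (Nat.one_le_cast.2 hb) (d * q + l) (d + 1)
    _ = _ := by ring

/-- **Minkowski content bounds the covering numbers** (inequality (8) of the paper, with
`s = d+1`): if `∂A` admits an `(s-1)`-dimensional Minkowski content, then
`Γ_k(ψ) ≤ c b^{(1-1/s)k}` for all `k`, i.e. for every `u ∈ [0,1]^{s-1}` the set
`∂J_u* \ ∂[0,1]^s` is covered by at most `c b^{(1-1/s)k}` pairwise disjoint `b`-adic
elementary intervals of order `k`. -/
theorem covering_number_of_minkowski (d : ℕ) (hd : 1 ≤ d) (b : ℕ) (hb : 2 ≤ b)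
    (ψ : (Fin d → ℝ) → ℝ) (hmeas : Measurable ψ)
    (hψ : ∀ z ∈ Icc (0 : Fin d → ℝ) 1, ψ z ∈ Icc (0 : ℝ) 1)
    (MA : ℝ) (hMApos : 0 < MA) (hMink : HasMinkowskiContentP (graphRegion₁ ψ) MA) :
    ∃ c : ℝ, 0 < c ∧
      ∀ k : ℕ, ∀ u ∈ Icc (0 : Fin d → ℝ) 1, ∃ v : ℕ,
        (v : ℝ) ≤ c * (b : ℝ) ^ ((1 - 1 / (d + 1 : ℝ)) * k) ∧
        ∃ U : Fin v → Set ((Fin d → ℝ) × ℝ),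
          (∀ i, IsElemIntervalP b k (U i)) ∧
          (∀ i j, i ≠ j → Disjoint (U i) (U j)) ∧
          frontier (Jstar₁ ψ u) \ frontier (unitCubeP d) ⊆ ⋃ i, U i := by
  obtain ⟨c, hc, hcover⟩ := covering_number_of_minkowski_general (zero_lt_two.trans_le hb)
    (hMink.hasFiniteUpperMinkowskiContent hMApos)
  exact ⟨c, hc, fun k u hu => hcover k u hu.2⟩
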